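/- arXiv:2203.12345 — 3 statements merged into one kernel-verified Lean document; each statement's English description precedes it below -/
import Mathlib

section
/- Let x be a surface patch with a rounded corner at (0,0). Then there exist constants C > 0 and H' ∈ (0,H] such that for all (u,v) ∈ [0,H']² \ {(0,0)}, both principal curvatures (the eigenvalues κ₁(u,v), κ₂(u,v) of the shape operator S = G⁻¹B) satisfy |κ_i(u,v)| ≤ C / max{u,v}. -/
/-!
Write `a = x_u`, `b = x_v`, `h = max u v`. At the corner `a` and `b` are antiparallel, so the
tangent frame `a`, `b` degenerates; the frame `a`, `m` with `m = μ a + λ b` is better adapted. Since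
`m` vanishes at the corner, `m = u r + v s + O(h²)`, hence
`a × m = λ (u (t × r) + v (t × s)) + O(h²)` (`exists_cross3_expansion`). Onesidedness prevents
cancellation between the two terms (`min_norm_mul_max_le`), so `‖a × m‖ ≥ d h` for some `d > 0`:
the patch is regular near the corner. By coplanarity, `r` and `s` are orthogonal to both `t × r` and
`t × s`, so the normal components of `∂m/∂u = r + O(h)` and `∂m/∂v = s + O(h)` are `O(h)`
(`abs_inner_normalize_le`).

For a tangent vector `W = p a + q m` these facts give `‖W‖² ≥ const (p² + h² q²)`, whereas the
second fundamental form of `W` is bounded by `const (p² + h |p q| + h q²)`, and therefore by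
`const ‖W‖² / h`. Pairing the eigenvalue equation `B w = κ G w` with `w` (`exists_form_eq`) shows
that `κ` is the quotient of the two forms, whence the bound (`abs_le_div_of_form_eq`).
-/

open scoped RealInnerProductSpace

noncomputable section

/-- ℝ³ with the Euclidean inner product and norm. -/
abbrev E3 : Type := EuclideanSpace ℝ (Fin 3)

/-- The cross product on Euclidean ℝ³. -/
def cross3 (a b : E3) : E3 :=
  (WithLp.equiv 2 (Fin 3 → ℝ)).symm
    (crossProduct ((WithLp.equiv 2 (Fin 3 → ℝ)) a) ((WithLp.equiv 2 (Fin 3 → ℝ)) b))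

/-- Partial derivative with respect to the first variable. -/
def pd1 (x : ℝ × ℝ → E3) (p : ℝ × ℝ) : E3 := fderiv ℝ x p (1, 0)

/-- Partial derivative with respect to the second variable. -/
def pd2 (x : ℝ × ℝ → E3) (p : ℝ × ℝ) : E3 := fderiv ℝ x p (0, 1)

/-- The unit normal of a surface patch, `ν = (x_u × x_v)/‖x_u × x_v‖`
(junk value `0` where the cross product vanishes). -/
def unitNormal (x : ℝ × ℝ → E3) (p : ℝ × ℝ) : E3 :=
  ‖cross3 (pd1 x p) (pd2 x p)‖⁻¹ • cross3 (pd1 x p) (pd2 x p)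

/-- The first fundamental form `G` of the surface patch `x`. -/
def firstFF (x : ℝ × ℝ → E3) (p : ℝ × ℝ) : Matrix (Fin 2) (Fin 2) ℝ :=
  !![⟪pd1 x p, pd1 x p⟫, ⟪pd1 x p, pd2 x p⟫;
     ⟪pd1 x p, pd2 x p⟫, ⟪pd2 x p, pd2 x p⟫]

/-- The second fundamental form `B` of the surface patch `x`. -/
def secondFF (x : ℝ × ℝ → E3) (p : ℝ × ℝ) : Matrix (Fin 2) (Fin 2) ℝ :=
  !![⟪pd1 (pd1 x) p, unitNormal x p⟫, ⟪pd2 (pd1 x) p, unitNormal x p⟫;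
     ⟪pd2 (pd1 x) p, unitNormal x p⟫, ⟪pd2 (pd2 x) p, unitNormal x p⟫]

/-- The shape operator `S = G⁻¹ B` of the surface patch `x`. -/
def shapeOp (x : ℝ × ℝ → E3) (p : ℝ × ℝ) : Matrix (Fin 2) (Fin 2) ℝ :=
  (firstFF x p)⁻¹ * secondFF x p

/-- `κ` is a principal curvature of `x` at `p`: an eigenvalue of the shape operator. -/
def IsPrincipalCurvature (x : ℝ × ℝ → E3) (p : ℝ × ℝ) (κ : ℝ) : Prop :=
  ∃ w : Fin 2 → ℝ, w ≠ 0 ∧ (shapeOp x p).mulVec w = κ • w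

/-! ### Vector algebra in `ℝ³` -/

theorem E3.inner_eq (a b : E3) : ⟪a, b⟫ = a 0 * b 0 + a 1 * b 1 + a 2 * b 2 := by
  simp [PiLp.inner_apply, Fin.sum_univ_three]
  ring

theorem cross3_zero_apply (a b : E3) : cross3 a b 0 = a 1 * b 2 - a 2 * b 1 := by
  simp [cross3, cross_apply]

theorem cross3_one_apply (a b : E3) : cross3 a b 1 = a 2 * b 0 - a 0 * b 2 := by
  simp [cross3, cross_apply]

theorem cross3_two_apply (a b : E3) : cross3 a b 2 = a 0 * b 1 - a 1 * b 0 := by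
  simp [cross3, cross_apply]

theorem cross3_add_right (a b c : E3) : cross3 a (b + c) = cross3 a b + cross3 a c := by
  ext i
  fin_cases i <;> simp [cross3_zero_apply, cross3_one_apply, cross3_two_apply] <;> ring

theorem cross3_smul_right (k : ℝ) (a b : E3) : cross3 a (k • b) = k • cross3 a b := by
  ext i
  fin_cases i <;> simp [cross3_zero_apply, cross3_one_apply, cross3_two_apply] <;> ring

theorem cross3_add_left (a b c : E3) : cross3 (a + b) c = cross3 a c + cross3 b c := by
  ext i
  fin_cases i <;> simp [cross3_zero_apply, cross3_one_apply, cross3_two_apply] <;> ring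

theorem cross3_smul_left (k : ℝ) (a b : E3) : cross3 (k • a) b = k • cross3 a b := by
  ext i
  fin_cases i <;> simp [cross3_zero_apply, cross3_one_apply, cross3_two_apply] <;> ring

theorem cross3_self (a : E3) : cross3 a a = 0 := by
  ext i
  fin_cases i <;> simp [cross3_zero_apply, cross3_one_apply, cross3_two_apply] <;> ring

/-- Lagrange's identity. -/
theorem norm_cross3_sq (a b : E3) : ‖cross3 a b‖ ^ 2 = ⟪a, a⟫ * ⟪b, b⟫ - ⟪a, b⟫ ^ 2 := by
  rw [← real_inner_self_eq_norm_sq]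
  simp only [E3.inner_eq, cross3_zero_apply, cross3_one_apply, cross3_two_apply]
  ring

theorem norm_cross3_le (a b : E3) : ‖cross3 a b‖ ≤ ‖a‖ * ‖b‖ := by
  refine (le_abs_self _).trans (abs_le_of_sq_le_sq ?_ (by positivity))
  rw [norm_cross3_sq, real_inner_self_eq_norm_sq, real_inner_self_eq_norm_sq]
  nlinarith [sq_nonneg ⟪a, b⟫]

theorem inner_self_cross3 (r t : E3) : ⟪r, cross3 t r⟫ = 0 := by
  simp only [E3.inner_eq, cross3_zero_apply, cross3_one_apply, cross3_two_apply]
  ring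

theorem inner_cross3_eq_zero_of_not_linearIndependent {r s t : E3}
    (h : ¬ LinearIndependent ℝ ![r, s, t]) : ⟪r, cross3 t s⟫ = 0 := by
  obtain ⟨g, hg, i, hi⟩ := Fintype.not_linearIndependent_iff.mp h
  have h0 := congrArg (fun z : E3 => z 0) hg
  have h1 := congrArg (fun z : E3 => z 1) hg
  have h2 := congrArg (fun z : E3 => z 2) hg
  simp [Fin.sum_univ_three] at h0 h1 h2
  simp only [E3.inner_eq, cross3_zero_apply, cross3_one_apply, cross3_two_apply]
  refine (mul_eq_zero.mp (?_ : g i * _ = 0)).resolve_left hi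
  -- Cramer's rule: each coefficient of the relation times the determinant vanishes.
  fin_cases i
  · simp only [Fin.zero_eta]
    linear_combination (t 1 * s 2 - t 2 * s 1) * h0 + (t 2 * s 0 - t 0 * s 2) * h1
      + (t 0 * s 1 - t 1 * s 0) * h2
  · simp only [Fin.mk_one]
    linear_combination (r 1 * t 2 - r 2 * t 1) * h0 + (r 2 * t 0 - r 0 * t 2) * h1
      + (r 0 * t 1 - r 1 * t 0) * h2
  · simp only [Fin.reduceFinMk]
    linear_combination (s 1 * r 2 - s 2 * r 1) * h0 + (s 2 * r 0 - s 0 * r 2) * h1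
      + (s 0 * r 1 - s 1 * r 0) * h2

/-- A nonnegative combination of vectors at an acute angle cannot be short: nothing cancels. -/
theorem min_norm_mul_max_le {P Q : E3} (h : 0 < ⟪P, Q⟫) {u v : ℝ} (hu : 0 ≤ u) (hv : 0 ≤ v) :
    min ‖P‖ ‖Q‖ * max u v ≤ ‖u • P + v • Q‖ := by
  refine (le_abs_self _).trans (abs_le_of_sq_le_sq ?_ (norm_nonneg _))
  rw [norm_add_sq_real, norm_smul, norm_smul, real_inner_smul_left, real_inner_smul_right,
    Real.norm_of_nonneg hu, Real.norm_of_nonneg hv]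
  have hcross : 0 ≤ u * (v * ⟪P, Q⟫) := by positivity
  rcases max_cases u v with ⟨e, -⟩ | ⟨e, -⟩ <;> rw [e]
  · have := mul_le_mul_of_nonneg_right (min_le_left ‖P‖ ‖Q‖) hu
    have h2 := pow_le_pow_left₀ (by positivity) this 2
    nlinarith [sq_nonneg (v * ‖Q‖)]
  · have := mul_le_mul_of_nonneg_right (min_le_right ‖P‖ ‖Q‖) hv
    have h2 := pow_le_pow_left₀ (by positivity) this 2
    nlinarith [sq_nonneg (u * ‖P‖)]

/-! ### The eigenvalue equation -/

/-- At a regular point, an eigenvector of `G⁻¹B` satisfies `κ ⟨w, G w⟩ = ⟨w, B w⟩`. -/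
theorem exists_form_eq {x : ℝ × ℝ → E3} {p : ℝ × ℝ} {κ : ℝ}
    (hreg : cross3 (pd1 x p) (pd2 x p) ≠ 0) (hκ : IsPrincipalCurvature x p κ) :
    ∃ w₁ w₂ : ℝ, (w₁ ≠ 0 ∨ w₂ ≠ 0) ∧
      κ * ‖w₁ • pd1 x p + w₂ • pd2 x p‖ ^ 2 =
        w₁ ^ 2 * ⟪pd1 (pd1 x) p, unitNormal x p⟫
        + 2 * w₁ * w₂ * ⟪pd2 (pd1 x) p, unitNormal x p⟫
        + w₂ ^ 2 * ⟪pd2 (pd2 x) p, unitNormal x p⟫ := by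
  obtain ⟨w, hw, hS⟩ := hκ
  have hdet : IsUnit (firstFF x p).det := by
    rw [isUnit_iff_ne_zero]
    have : (firstFF x p).det = ‖cross3 (pd1 x p) (pd2 x p)‖ ^ 2 := by
      rw [norm_cross3_sq, firstFF, Matrix.det_fin_two_of]; ring
    rw [this]
    exact pow_ne_zero 2 (norm_ne_zero_iff.mpr hreg)
  have hB : (secondFF x p).mulVec w = κ • (firstFF x p).mulVec w := by
    have := congrArg (firstFF x p).mulVec hS
    rwa [shapeOp, Matrix.mulVec_mulVec, Matrix.mul_nonsing_inv_cancel_left _ _ hdet,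
      Matrix.mulVec_smul] at this
  refine ⟨w 0, w 1, ?_, ?_⟩
  · by_contra! h
    exact hw (by ext i; fin_cases i <;> simp [h.1, h.2])
  · have h0 := congrFun hB 0
    have h1 := congrFun hB 1
    simp [secondFF, firstFF, Matrix.mulVec, dotProduct, Fin.sum_univ_two] at h0 h1
    rw [norm_add_sq_real, norm_smul, norm_smul, real_inner_smul_left, real_inner_smul_right,
      mul_pow, mul_pow, Real.norm_eq_abs, Real.norm_eq_abs, sq_abs, sq_abs]
    linear_combination (-w 0) * h0 - w 1 * h1

/-! ### Taylor expansion and partial derivatives -/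

/-- The first-order Taylor remainder of a `C²` map is quadratic. -/
theorem exists_quadratic_remainder {f : ℝ × ℝ → E3} (hf : ContDiff ℝ 2 f) :
    ∃ K > 0, ∃ ε > 0, ∀ p : ℝ × ℝ, ‖p‖ < ε →
      ‖f p - f 0 - fderiv ℝ f 0 p‖ ≤ K * ‖p‖ ^ 2 := by
  have hd : ContDiff ℝ 1 (fderiv ℝ f) := hf.fderiv_right (by norm_num)
  have hO := ((hd.differentiable (by norm_num)) 0).isBigO_sub
  obtain ⟨K, hK, hb⟩ := hO.exists_pos
  obtain ⟨ε, hε, hball⟩ := Metric.eventually_nhds_iff_ball.mp hb.bound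
  refine ⟨K, hK, ε, hε, fun p hp => ?_⟩
  have key := (convex_closedBall (0 : ℝ × ℝ) ‖p‖).norm_image_sub_le_of_norm_fderiv_le'
    (f := f) (𝕜 := ℝ) (φ := fderiv ℝ f 0) (C := K * ‖p‖) (x := 0) (y := p)
    (fun q _ => (hf.differentiable (by norm_num)) q)
    (fun q hq => by
      rw [mem_closedBall_zero_iff] at hq
      have := hball q (by rw [mem_ball_zero_iff]; exact hq.trans_lt hp)
      rw [sub_zero] at this
      exact this.trans (by gcongr))
    (by simp) (by simp)
  rw [sub_zero] at key
  calc _ ≤ _ := key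
    _ = _ := by ring

/-- A `C¹` map is Lipschitz at the origin. -/
theorem exists_linear_bound {f : ℝ × ℝ → E3} (hf : ContDiff ℝ 1 f) :
    ∃ K > 0, ∃ ε > 0, ∀ p : ℝ × ℝ, ‖p‖ < ε → ‖f p - f 0‖ ≤ K * ‖p‖ := by
  obtain ⟨K, hK, hb⟩ := ((hf.differentiable (by norm_num)) 0).isBigO_sub.exists_pos
  obtain ⟨ε, hε, hball⟩ := Metric.eventually_nhds_iff_ball.mp hb.bound
  refine ⟨K, hK, ε, hε, fun p hp => ?_⟩
  simpa using hball p (by simpa using hp)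

theorem contDiff_pd1 {n m : ℕ} (h : m + 1 ≤ n) {f : ℝ × ℝ → E3} (hf : ContDiff ℝ n f) :
    ContDiff ℝ m (pd1 f) := by
  have : ContDiff ℝ m (fderiv ℝ f) := hf.fderiv_right (by exact_mod_cast h)
  exact this.clm_apply contDiff_const

theorem contDiff_pd2 {n m : ℕ} (h : m + 1 ≤ n) {f : ℝ × ℝ → E3} (hf : ContDiff ℝ n f) :
    ContDiff ℝ m (pd2 f) := by
  have : ContDiff ℝ m (fderiv ℝ f) := hf.fderiv_right (by exact_mod_cast h)
  exact this.clm_apply contDiff_const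

theorem pd1_pd2_comm {f : ℝ × ℝ → E3} (hf : ContDiff ℝ 3 f) (p : ℝ × ℝ) :
    pd1 (pd2 f) p = pd2 (pd1 f) p := by
  have hd : DifferentiableAt ℝ (fderiv ℝ f) p :=
    (hf.fderiv_right (m := 2) (by norm_num)).differentiable (by norm_num) p
  have h1 : pd1 (pd2 f) p = fderiv ℝ (fderiv ℝ f) p (1, 0) (0, 1) := by
    unfold pd1 pd2
    rw [fderiv_clm_apply hd (differentiableAt_const _)]
    simp
  have h2 : pd2 (pd1 f) p = fderiv ℝ (fderiv ℝ f) p (0, 1) (1, 0) := by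
    unfold pd1 pd2
    rw [fderiv_clm_apply hd (differentiableAt_const _)]
    simp
  rw [h1, h2]
  exact (hf.contDiffAt.isSymmSndFDerivAt (by simp; norm_num)) _ _

/-! ### Estimates near the corner -/

/-- The quadratic-form estimate behind the bound. In the tangent frame `a`, `m = μ a + λ b` the
first fundamental form dominates `p² + h² q²`, while `h` times the second one is dominated by
`p² + h² q²`. -/
theorem abs_le_div_of_form_eq {a b : E3} {lam mu h K d δ L M N w₁ w₂ κ : ℝ}
    (hlam : 0 < lam) (hmu : 0 < mu) (hh : 0 < h) (hh1 : h ≤ 1) (hK : 0 < K) (hd : 0 < d)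
    (hδ : 0 < δ) (haδ : δ ≤ ‖a‖) (haK : ‖a‖ ≤ K) (hm : ‖mu • a + lam • b‖ ≤ K * h)
    (hcr : d * h ≤ ‖cross3 a (mu • a + lam • b)‖) (hL : |L| ≤ K)
    (hM : |mu * L + lam * M| ≤ K * h) (hN : |mu * M + lam * N| ≤ K * h)
    (hw : w₁ ≠ 0 ∨ w₂ ≠ 0)
    (heq : κ * ‖w₁ • a + w₂ • b‖ ^ 2 = w₁ ^ 2 * L + 2 * w₁ * w₂ * M + w₂ ^ 2 * N) :
    |κ| ≤ (((1 + K * (K / d)) / δ) ^ 2 * K + 2 * ((1 + K * (K / d)) / δ) * (K / d) * K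
      + (K / d) ^ 2 * (K * (mu + lam))) / h := by
  obtain ⟨q, rfl⟩ : ∃ q, w₂ = lam * q := ⟨w₂ / lam, by field_simp⟩
  obtain ⟨p, rfl⟩ : ∃ p, w₁ = p + mu * q := ⟨w₁ - mu * q, by ring⟩
  set m := mu • a + lam • b with hmdef
  have hW : (p + mu * q) • a + (lam * q) • b = p • a + q • m := by
    rw [hmdef]; module
  rw [hW] at heq
  set W := p • a + q • m with hWdef
  have hform : (p + mu * q) ^ 2 * L + 2 * (p + mu * q) * (lam * q) * M + (lam * q) ^ 2 * N
      = p ^ 2 * L + 2 * (p * q) * (mu * L + lam * M)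
        + q ^ 2 * (mu * (mu * L + lam * M) + lam * (mu * M + lam * N)) := by ring
  rw [hform] at heq
  set A := K / d with hA
  set A₂ := (1 + K * A) / δ with hA₂
  have hA0 : 0 < A := by positivity
  have hA₂0 : 0 < A₂ := by positivity
  have hq : |q| * h ≤ A * ‖W‖ := by
    have h1 : cross3 a W = q • cross3 a m := by
      rw [hWdef, cross3_add_right, cross3_smul_right, cross3_smul_right, cross3_self]; simp
    have h2 : |q| * ‖cross3 a m‖ ≤ ‖a‖ * ‖W‖ := by
      rw [← Real.norm_eq_abs, ← norm_smul, ← h1]; exact norm_cross3_le a W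
    have h3 : |q| * (d * h) ≤ K * ‖W‖ :=
      (mul_le_mul_of_nonneg_left hcr (abs_nonneg q)).trans
        (h2.trans (mul_le_mul_of_nonneg_right haK (norm_nonneg W)))
    rw [hA, div_mul_eq_mul_div, le_div_iff₀ hd]
    linarith
  have hp : |p| ≤ A₂ * ‖W‖ := by
    have h1 : |p| * ‖a‖ ≤ ‖W‖ + |q| * ‖m‖ := by
      rw [← Real.norm_eq_abs, ← Real.norm_eq_abs, ← norm_smul, ← norm_smul]
      have : p • a = W - q • m := by rw [hWdef]; module
      rw [this]; exact norm_sub_le _ _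
    have h2 : |p| * δ ≤ |p| * ‖a‖ := mul_le_mul_of_nonneg_left haδ (abs_nonneg p)
    have h3 : |q| * ‖m‖ ≤ K * (A * ‖W‖) := by
      calc |q| * ‖m‖ ≤ |q| * (K * h) := mul_le_mul_of_nonneg_left hm (abs_nonneg q)
        _ = K * (|q| * h) := by ring
        _ ≤ _ := by gcongr
    rw [hA₂, div_mul_eq_mul_div, le_div_iff₀ hδ]
    linarith
  have hWpos : 0 < ‖W‖ := by
    rcases (norm_nonneg W).eq_or_lt with h0 | h0
    · rw [← h0, mul_zero] at hq hp
      have hp0 : p = 0 := abs_eq_zero.mp (le_antisymm hp (abs_nonneg p))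
      have hq0 : q = 0 := by
        by_contra hne
        exact absurd hq (not_le.mpr (by positivity))
      simp [hp0, hq0] at hw
    · exact h0
  rw [le_div_iff₀ hh]
  have hform_le : |κ| * ‖W‖ ^ 2 * h ≤
      (A₂ ^ 2 * K + 2 * A₂ * A * K + A ^ 2 * (K * (mu + lam))) * ‖W‖ ^ 2 := by
    have habs : |κ| * ‖W‖ ^ 2 ≤ |p| ^ 2 * K + 2 * (|p| * |q|) * (K * h)
        + |q| ^ 2 * (mu * (K * h) + lam * (K * h)) := by
      rw [← abs_of_nonneg (sq_nonneg ‖W‖), ← abs_mul, heq]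
      refine (abs_add_three _ _ _).trans ?_
      simp only [abs_mul, abs_pow, abs_two]
      gcongr
      refine (abs_add_le _ _).trans ?_
      rw [abs_mul, abs_mul, abs_of_pos hmu, abs_of_pos hlam]
      gcongr
    calc |κ| * ‖W‖ ^ 2 * h
        ≤ (|p| ^ 2 * K + 2 * (|p| * |q|) * (K * h)
          + |q| ^ 2 * (mu * (K * h) + lam * (K * h))) * h := by gcongr
      _ = |p| ^ 2 * K * h + 2 * (|p| * (|q| * h)) * K * h
          + (|q| * h) ^ 2 * (K * (mu + lam)) := by ring
      _ ≤ |p| ^ 2 * K * 1 + 2 * (|p| * (|q| * h)) * K * 1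
          + (|q| * h) ^ 2 * (K * (mu + lam)) := by gcongr
      _ ≤ (A₂ * ‖W‖) ^ 2 * K * 1 + 2 * ((A₂ * ‖W‖) * (A * ‖W‖)) * K * 1
          + (A * ‖W‖) ^ 2 * (K * (mu + lam)) := by gcongr
      _ = _ := by ring
  have hW2 : 0 < ‖W‖ ^ 2 := by positivity
  refine le_of_mul_le_mul_right ?_ hW2
  linarith

/-- Near the corner, `m = O(h)` and `a × m` equals `λ (u (t × r) + v (t × s))` up to a quadratic
error. -/
theorem exists_cross3_expansion {lam K u v h : ℝ} {t r s a m : E3} (hlam : 0 < lam)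
    (hK : 0 < K) (hh : 0 < h) (hh1 : h ≤ 1) (ht : ‖t‖ = 1) (hu : |u| ≤ h) (hv : |v| ≤ h)
    (ha : ‖a - lam • t‖ ≤ K * h) (hm : ‖m - (u • r + v • s)‖ ≤ K * h ^ 2) :
    ‖m‖ ≤ (‖r‖ + ‖s‖ + K) * h ∧ ∃ e : E3,
      cross3 a m = lam • (u • cross3 t r + v • cross3 t s) + e ∧
      ‖e‖ ≤ (K * (‖r‖ + ‖s‖ + K) + lam * K) * h ^ 2 := by
  have hmn : ‖m‖ ≤ (‖r‖ + ‖s‖ + K) * h := by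
    have h1 : ‖m‖ ≤ ‖m - (u • r + v • s)‖ + (‖u • r‖ + ‖v • s‖) := by
      calc ‖m‖ = ‖(m - (u • r + v • s)) + (u • r + v • s)‖ := by rw [sub_add_cancel]
        _ ≤ _ := (norm_add_le _ _).trans (by gcongr; exact norm_add_le _ _)
    rw [norm_smul, norm_smul, Real.norm_eq_abs, Real.norm_eq_abs] at h1
    have h2 : |u| * ‖r‖ ≤ h * ‖r‖ := by gcongr
    have h3 : |v| * ‖s‖ ≤ h * ‖s‖ := by gcongr
    have h4 : K * h ^ 2 ≤ K * h := by
      have : h ^ 2 ≤ h := by nlinarith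
      gcongr
    linarith
  refine ⟨hmn, cross3 (a - lam • t) m + lam • cross3 t (m - (u • r + v • s)), ?_, ?_⟩
  · rw [← cross3_smul_right u, ← cross3_smul_right v, ← cross3_add_right]
    set y := u • r + v • s
    have e1 : cross3 a m = cross3 (a - lam • t) m + lam • cross3 t m := by
      rw [← cross3_smul_left, ← cross3_add_left, sub_add_cancel]
    have e2 : cross3 t m = cross3 t (m - y) + cross3 t y := by
      rw [← cross3_add_right, sub_add_cancel]
    rw [e1, e2]
    module
  · refine (norm_add_le _ _).trans ?_
    rw [norm_smul, Real.norm_of_nonneg hlam.le]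
    have h1 : ‖cross3 (a - lam • t) m‖ ≤ (K * h) * ((‖r‖ + ‖s‖ + K) * h) :=
      (norm_cross3_le _ _).trans (by gcongr)
    have h2 : ‖cross3 t (m - (u • r + v • s))‖ ≤ K * h ^ 2 := by
      refine (norm_cross3_le _ _).trans ?_
      rw [ht, one_mul]; exact hm
    have h3 := mul_le_mul_of_nonneg_left h2 hlam.le
    linarith

/-- A vector within `O(h)` of `y₀` has normal component `O(h)`, if `y₀` is orthogonal to the
leading part `g` of the normal direction `g + e`, where `‖g + e‖ ≥ d h` and `e = O(h²)`. -/
theorem abs_inner_normalize_le {K E d h : ℝ} {Y y₀ g e : E3} (hd : 0 < d) (hh : 0 < h)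
    (hY : ‖Y - y₀‖ ≤ K * h) (hg : ⟪y₀, g⟫ = 0) (he : ‖e‖ ≤ E * h ^ 2)
    (hn : d * h ≤ ‖g + e‖) :
    |⟪Y, ‖g + e‖⁻¹ • (g + e)⟫| ≤ (K + ‖y₀‖ * E / d) * h := by
  have hdh : 0 < d * h := by positivity
  have hpos : 0 < ‖g + e‖ := hdh.trans_le hn
  have hsplit : ⟪Y, g + e⟫ = ⟪Y - y₀, g + e⟫ + ⟪y₀, e⟫ := by
    rw [inner_sub_left, inner_add_right y₀, hg]; ring
  rw [real_inner_smul_right, abs_mul, abs_of_pos (inv_pos.mpr hpos), inv_mul_le_iff₀ hpos, hsplit]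
  refine (abs_add_le _ _).trans ?_
  have h1 : |⟪Y - y₀, g + e⟫| ≤ K * h * ‖g + e‖ :=
    (abs_real_inner_le_norm _ _).trans (by gcongr)
  have h2 : |⟪y₀, e⟫| ≤ ‖y₀‖ * (E * h ^ 2) :=
    (abs_real_inner_le_norm _ _).trans (by gcongr)
  have hE : 0 ≤ E := by
    have := (norm_nonneg e).trans he
    exact nonneg_of_mul_nonneg_left this (by positivity)
  have h3 : ‖y₀‖ * (E * h ^ 2) ≤ ‖y₀‖ * E / d * h * ‖g + e‖ := by
    calc ‖y₀‖ * (E * h ^ 2) = ‖y₀‖ * E / d * h * (d * h) := by field_simp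
      _ ≤ _ := by gcongr
  linarith

/-- The unit normal may be computed from any positively oriented tangent frame `a`, `μ a + λ b`. -/
theorem normalize_cross3_eq {lam : ℝ} (hlam : 0 < lam) (mu : ℝ) (a b : E3) :
    ‖cross3 a b‖⁻¹ • cross3 a b =
      ‖cross3 a (mu • a + lam • b)‖⁻¹ • cross3 a (mu • a + lam • b) := by
  have h : cross3 a (mu • a + lam • b) = lam • cross3 a b := by
    rw [cross3_add_right, cross3_smul_right, cross3_smul_right, cross3_self]; simp
  rw [h, norm_smul, Real.norm_of_nonneg hlam.le, smul_smul]
  congr 1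
  field_simp

theorem fderiv_apply_eq {f : ℝ × ℝ → E3} (p : ℝ × ℝ) (u v : ℝ) :
    fderiv ℝ f p (u, v) = u • pd1 f p + v • pd2 f p := by
  have : ((u, v) : ℝ × ℝ) = u • (1, 0) + v • (0, 1) := by simp
  rw [this, map_add, map_smul, map_smul, pd1, pd2]

set_option maxHeartbeats 1000000 in
/-- **Principal curvature bound at a rounded corner.**
If `x` has a rounded corner at `(0,0)`, then near the corner both principal
curvatures (eigenvalues of the shape operator `S = G⁻¹B`) satisfy
`|κ| ≤ C / max{u,v}`. -/
theorem rounded_corner_curvature_bound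
    (H : ℝ) (hH : 0 < H) (x : ℝ × ℝ → E3) (hx : ContDiff ℝ 3 x)
    (t : E3) (ht : ‖t‖ = 1) (lam mu : ℝ) (hlam : 0 < lam) (hmu : 0 < mu)
    (hxi10 : pd1 x (0, 0) = lam • t)
    (hxi01 : pd2 x (0, 0) = -(mu • t))
    (r s : E3)
    (hr : r = mu • pd1 (pd1 x) (0, 0) + lam • pd2 (pd1 x) (0, 0))
    (hs : s = lam • pd2 (pd2 x) (0, 0) + mu • pd2 (pd1 x) (0, 0))
    (hcop : ¬ LinearIndependent ℝ ![r, s, t])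
    (hone : 0 < ⟪cross3 t r, cross3 t s⟫) :
    ∃ C : ℝ, 0 < C ∧ ∃ H' : ℝ, H' ∈ Set.Ioc 0 H ∧
      ∀ u v : ℝ, u ∈ Set.Icc (0 : ℝ) H' → v ∈ Set.Icc (0 : ℝ) H' → (u, v) ≠ (0, 0) →
        ∀ κ : ℝ, IsPrincipalCurvature x (u, v) κ → |κ| ≤ C / max u v := by
  have hx1 : ContDiff ℝ 2 (pd1 x) := contDiff_pd1 (n := 3) (m := 2) le_rfl hx
  have hx2 : ContDiff ℝ 2 (pd2 x) := contDiff_pd2 (n := 3) (m := 2) le_rfl hx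
  have h11 : ContDiff ℝ 1 (pd1 (pd1 x)) := contDiff_pd1 (n := 2) (m := 1) le_rfl hx1
  have h12 : ContDiff ℝ 1 (pd2 (pd1 x)) := contDiff_pd2 (n := 2) (m := 1) le_rfl hx1
  have h22 : ContDiff ℝ 1 (pd2 (pd2 x)) := contDiff_pd2 (n := 2) (m := 1) le_rfl hx2
  have hz : ((0, 0) : ℝ × ℝ) = 0 := rfl
  -- `m` vanishes at the corner, with differential `(u, v) ↦ u r + v s`.
  let m : ℝ × ℝ → E3 := fun p => mu • pd1 x p + lam • pd2 x p
  have hmC : ContDiff ℝ 2 m := (hx1.const_smul mu).add (hx2.const_smul lam)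
  have hm0 : m 0 = 0 := by
    simp only [m, ← hz, hxi10, hxi01]; module
  have hmd (u v : ℝ) : fderiv ℝ m 0 (u, v) = u • r + v • s := by
    have hd1 := hx1.differentiable (by norm_num) 0
    have hd2 := hx2.differentiable (by norm_num) 0
    have : fderiv ℝ m 0 = mu • fderiv ℝ (pd1 x) 0 + lam • fderiv ℝ (pd2 x) 0 :=
      ((hd1.hasFDerivAt.const_smul mu).add (hd2.hasFDerivAt.const_smul lam)).fderiv
    rw [this, add_apply, smul_apply,
      smul_apply, fderiv_apply_eq, fderiv_apply_eq, pd1_pd2_comm hx, hr, hs, hz]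
    module
  obtain ⟨K₁, hK₁, ε₁, hε₁, b₁⟩ := exists_quadratic_remainder hmC
  obtain ⟨K₂, hK₂, ε₂, hε₂, b₂⟩ := exists_linear_bound (hx1.of_le (by norm_num))
  obtain ⟨K₃, hK₃, ε₃, hε₃, b₃⟩ := exists_linear_bound h11
  obtain ⟨K₄, hK₄, ε₄, hε₄, b₄⟩ :=
    exists_linear_bound ((h11.const_smul mu).add (h12.const_smul lam))
  obtain ⟨K₅, hK₅, ε₅, hε₅, b₅⟩ :=
    exists_linear_bound ((h12.const_smul mu).add (h22.const_smul lam))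
  set K := K₁ + K₂ + K₃ + K₄ + K₅ with hK
  have hKpos : 0 < K := by positivity
  set P := cross3 t r with hP
  set Q := cross3 t s with hQ
  set c := min ‖P‖ ‖Q‖ with hc
  have hcpos : 0 < c := by
    refine lt_min (norm_pos_iff.mpr ?_) (norm_pos_iff.mpr ?_) <;> intro h0 <;> simp [h0] at hone
  set R := ‖r‖ + ‖s‖ + K with hR
  have hRpos : 0 < R := by positivity
  set E := K * R + lam * K with hE
  have hEpos : 0 < E := by positivity
  set d := lam * c / 2 with hd
  have hdpos : 0 < d := by positivity
  have hrQ : ⟪r, Q⟫ = 0 := inner_cross3_eq_zero_of_not_linearIndependent hcop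
  have hsP : ⟪s, P⟫ = 0 := by
    rw [← neg_eq_zero, ← hrQ]
    simp only [hP, hQ, E3.inner_eq, cross3_zero_apply, cross3_one_apply, cross3_two_apply]
    ring
  have hrP : ⟪r, P⟫ = 0 := inner_self_cross3 r t
  have hsQ : ⟪s, Q⟫ = 0 := inner_self_cross3 s t
  -- A single constant dominating every bound required by `abs_le_div_of_form_eq`.
  set T := (lam + K) + R + (‖pd1 (pd1 x) 0‖ + K) + (K + ‖r‖ * E / d) + (K + ‖s‖ * E / d) with hT
  have hTpos : 0 < T := by positivity
  clear_value T d E R c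
  refine ⟨((1 + T * (T / d)) / (lam / 2)) ^ 2 * T
      + 2 * ((1 + T * (T / d)) / (lam / 2)) * (T / d) * T
      + (T / d) ^ 2 * (T * (mu + lam)), by positivity, ?_⟩
  -- The radius makes all expansions valid and keeps `x_u` and `x_u × m` away from zero.
  obtain ⟨ε, hε, hεlt⟩ : ∃ ε > 0, ε < ε₁ ∧ ε < ε₂ ∧ ε < ε₃ ∧ ε < ε₄ ∧ ε < ε₅ := by
    obtain ⟨ε, h0, h1⟩ := exists_between
      (show 0 < min ε₁ (min ε₂ (min ε₃ (min ε₄ ε₅))) by positivity)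
    simp only [lt_min_iff] at h1
    exact ⟨ε, h0, h1⟩
  obtain ⟨hl₁, hl₂, hl₃, hl₄, hl₅⟩ := hεlt
  refine ⟨min (min H ε) (min 1 (min (d / E) (lam / 2 / K))),
    ⟨by positivity, (min_le_left _ _).trans (min_le_left _ _)⟩, ?_⟩
  intro u v ⟨hu0, hu⟩ ⟨hv0, hv⟩ huv κ hκ
  have hmax := max_le hu hv
  set h := max u v with hh
  simp only [le_min_iff] at hmax
  obtain ⟨⟨-, hhε⟩, hh1, hhE, hhK⟩ := hmax
  rw [le_div_iff₀ hEpos] at hhE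
  rw [le_div_iff₀ hKpos] at hhK
  have hhpos : 0 < h := by
    refine lt_of_le_of_ne (hu0.trans (le_max_left _ _)) fun h0 => huv ?_
    have h1 : u ≤ 0 := h0 ▸ le_max_left u v
    have h2 : v ≤ 0 := h0 ▸ le_max_right u v
    rw [le_antisymm h1 hu0, le_antisymm h2 hv0]
  have hnorm : ‖((u, v) : ℝ × ℝ)‖ = h := by
    rw [Prod.norm_mk, Real.norm_of_nonneg hu0, Real.norm_of_nonneg hv0]
  have hau : |u| ≤ h := by rw [abs_of_nonneg hu0]; exact le_max_left _ _
  have hav : |v| ≤ h := by rw [abs_of_nonneg hv0]; exact le_max_right _ _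
  replace b₁ := b₁ (u, v) (by rw [hnorm]; linarith)
  replace b₂ := b₂ (u, v) (by rw [hnorm]; linarith)
  replace b₃ := b₃ (u, v) (by rw [hnorm]; linarith)
  replace b₄ := b₄ (u, v) (by rw [hnorm]; linarith)
  replace b₅ := b₅ (u, v) (by rw [hnorm]; linarith)
  rw [hnorm] at b₁ b₂ b₃ b₄ b₅
  rw [hm0, sub_zero, hmd] at b₁
  rw [← hz, hxi10] at b₂
  simp only [← hz, ← hr] at b₄
  simp only [← hz] at b₅
  rw [add_comm (mu • pd2 (pd1 x) (0, 0)), ← hs] at b₅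
  replace b₁ : ‖m (u, v) - (u • r + v • s)‖ ≤ K * h ^ 2 := b₁.trans (by gcongr; linarith)
  replace b₂ : ‖pd1 x (u, v) - lam • t‖ ≤ K * h := b₂.trans (by gcongr; linarith)
  replace b₃ := b₃.trans (show K₃ * h ≤ K * h by gcongr; linarith)
  replace b₄ := b₄.trans (show K₄ * h ≤ K * h by gcongr; linarith)
  replace b₅ := b₅.trans (show K₅ * h ≤ K * h by gcongr; linarith)
  obtain ⟨hmn, e, hcross, he⟩ :=
    exists_cross3_expansion hlam hKpos hhpos hh1 ht hau hav b₂ b₁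
  rw [← hP, ← hQ] at hcross
  rw [← hR] at hmn he
  rw [← hE] at he
  set g := lam • (u • P + v • Q) with hg
  have hlow : d * h ≤ ‖g + e‖ := by
    have h1 : lam * (c * h) ≤ ‖g‖ := by
      rw [hg, norm_smul, Real.norm_of_nonneg hlam.le]
      have h0 := min_norm_mul_max_le hone hu0 hv0
      rw [← hc, ← hh] at h0
      exact mul_le_mul_of_nonneg_left h0 hlam.le
    have h2 : ‖g‖ ≤ ‖g + e‖ + ‖e‖ := by
      simpa using norm_sub_le (g + e) e
    have h3 : E * h ^ 2 ≤ d * h := by nlinarith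
    have h4 : lam * (c * h) = d * h + d * h := by rw [hd]; ring
    linarith
  have hν : unitNormal x (u, v) = ‖g + e‖⁻¹ • (g + e) := by
    rw [unitNormal, normalize_cross3_eq hlam mu, ← hcross]
  have hreg : cross3 (pd1 x (u, v)) (pd2 x (u, v)) ≠ 0 := by
    intro h0
    have h1 : g + e = 0 := by
      rw [← hcross]
      simp only [m]
      rw [cross3_add_right, cross3_smul_right, cross3_smul_right, cross3_self, h0]; simp
    rw [h1, norm_zero] at hlow
    exact absurd hlow (not_le.mpr (by positivity))
  have hν1 : ‖unitNormal x (u, v)‖ = 1 := by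
    rw [unitNormal, norm_smul, norm_inv, norm_norm]
    exact inv_mul_cancel₀ (norm_ne_zero_iff.mpr hreg)
  have hrg : ⟪r, g⟫ = 0 := by
    rw [hg, real_inner_smul_right, inner_add_right, real_inner_smul_right, real_inner_smul_right,
      hrP, hrQ]; ring
  have hsg : ⟪s, g⟫ = 0 := by
    rw [hg, real_inner_smul_right, inner_add_right, real_inner_smul_right, real_inner_smul_right,
      hsP, hsQ]; ring
  have hMb := abs_inner_normalize_le hdpos hhpos b₄ hrg he hlow
  have hNb := abs_inner_normalize_le hdpos hhpos b₅ hsg he hlow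
  rw [← hν, inner_add_left, real_inner_smul_left, real_inner_smul_left] at hMb hNb
  have hKh : K * h ≤ K := mul_le_of_le_one_right hKpos.le hh1
  have hrE : 0 ≤ ‖r‖ * E / d := by positivity
  have hsE : 0 ≤ ‖s‖ * E / d := by positivity
  have hn0 := norm_nonneg (pd1 (pd1 x) 0)
  have hlt : ‖lam • t‖ = lam := by rw [norm_smul, ht, mul_one, Real.norm_of_nonneg hlam.le]
  obtain ⟨w₁, w₂, hw, heq⟩ := exists_form_eq hreg hκ
  refine abs_le_div_of_form_eq hlam hmu hhpos hh1 hTpos hdpos (half_pos hlam)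
    (a := pd1 x (u, v)) (b := pd2 x (u, v)) ?_ ?_ ?_ ?_ ?_ ?_ ?_ hw heq
  · have := norm_sub_norm_le (lam • t) (pd1 x (u, v))
    rw [norm_sub_rev, hlt] at this
    linarith
  · have := norm_sub_norm_le (pd1 x (u, v)) (lam • t)
    rw [hlt] at this
    linarith
  · exact hmn.trans (by gcongr; linarith)
  · exact hlow.trans_eq (congrArg norm hcross.symm)
  · refine (abs_real_inner_le_norm _ _).trans ?_
    have := norm_sub_norm_le (pd1 (pd1 x) (u, v)) (pd1 (pd1 x) 0)
    rw [hν1]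
    linarith
  · exact hMb.trans (by gcongr; linarith)
  · exact hNb.trans (by gcongr; linarith)
end
end

section
/- Let x be a surface patch with a rounded corner at (0,0). Then there exist constants C > 0 and H' ∈ (0,H] such that ‖x_u(u,v) × x_v(u,v)‖ ≤ C · max{u,v} for all (u,v) ∈ [0,H']²; i.e., the surface-element density ‖x_u × x_v‖ is O(max{u,v}) near the rounded corner. -/
/-! The two partial derivatives are antiparallel at the corner, so `x_u × x_v` vanishes there. It is
differentiable at the corner because `x` is twice differentiable, hence it is `O(‖(u, v)‖)`, and the
norm of `ℝ × ℝ` is the sup norm, equal to `max u v` for `u, v ≥ 0`. -/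

open scoped RealInnerProductSpace

noncomputable section

/-- Parallel vectors, such as the two partial derivatives at the corner, have zero cross product. -/
theorem cross3_smul_neg_smul (a b : ℝ) (t : E3) : cross3 (a • t) (-(b • t)) = 0 := by
  simp [cross3]

theorem differentiableAt_cross3 {f g : ℝ × ℝ → E3} {p : ℝ × ℝ}
    (hf : DifferentiableAt ℝ f p) (hg : DifferentiableAt ℝ g p) :
    DifferentiableAt ℝ (fun q => cross3 (f q) (g q)) p := by
  have hf' := differentiableAt_euclidean.mp hf
  have hg' := differentiableAt_euclidean.mp hg
  rw [differentiableAt_euclidean]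
  intro i
  fin_cases i <;> simp [cross3, cross_apply] <;>
    exact ((hf' _).mul (hg' _)).sub ((hf' _).mul (hg' _))

/-- **Surface-element bound at a rounded corner.**
If `x` has a rounded corner at `(0,0)`, then the surface-element density
satisfies `‖x_u × x_v‖ ≤ C · max{u,v}` near the corner. -/
theorem rounded_corner_surface_element_bound
    (H : ℝ) (hH : 0 < H) (x : ℝ × ℝ → E3) (hx : ContDiff ℝ 3 x)
    (t : E3) (ht : ‖t‖ = 1) (lam mu : ℝ) (hlam : 0 < lam) (hmu : 0 < mu)
    (hxi10 : pd1 x (0, 0) = lam • t)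
    (hxi01 : pd2 x (0, 0) = -(mu • t))
    (r s : E3)
    (hr : r = mu • pd1 (pd1 x) (0, 0) + lam • pd2 (pd1 x) (0, 0))
    (hs : s = lam • pd2 (pd2 x) (0, 0) + mu • pd2 (pd1 x) (0, 0))
    (hcop : ¬ LinearIndependent ℝ ![r, s, t])
    (hone : 0 < ⟪cross3 t r, cross3 t s⟫) :
    ∃ C : ℝ, 0 < C ∧ ∃ H' : ℝ, H' ∈ Set.Ioc 0 H ∧
      ∀ u v : ℝ, u ∈ Set.Icc (0 : ℝ) H' → v ∈ Set.Icc (0 : ℝ) H' →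
        ‖cross3 (pd1 x (u, v)) (pd2 x (u, v))‖ ≤ C * max u v := by
  have hd : Differentiable ℝ (fderiv ℝ x) :=
    (hx.fderiv_right (m := 1) (by norm_num)).differentiable (by norm_num)
  have h1 : DifferentiableAt ℝ (pd1 x) ((0 : ℝ), (0 : ℝ)) := by
    unfold pd1
    exact (hd _).clm_apply (differentiableAt_const _)
  have h2 : DifferentiableAt ℝ (pd2 x) ((0 : ℝ), (0 : ℝ)) := by
    unfold pd2
    exact (hd _).clm_apply (differentiableAt_const _)
  have hO := (differentiableAt_cross3 h1 h2).isBigO_sub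
  rw [hxi10, hxi01, cross3_smul_neg_smul] at hO
  obtain ⟨C, hC, hb⟩ := hO.exists_pos
  obtain ⟨ε, hε, hball⟩ := Metric.eventually_nhds_iff.mp hb.bound
  refine ⟨C, hC, min H (ε / 2), ⟨lt_min hH (half_pos hε), min_le_left _ _⟩, ?_⟩
  rintro u v ⟨hu0, hu⟩ ⟨hv0, hv⟩
  -- The norm of `ℝ × ℝ` is the sup norm, so on the positive quadrant it is `max u v`.
  have hnorm : ‖((u, v) : ℝ × ℝ) - (0, 0)‖ = max u v := by
    simp [Prod.norm_def, abs_of_nonneg hu0, abs_of_nonneg hv0]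
  have hlt : dist ((u, v) : ℝ × ℝ) (0, 0) < ε := by
    rw [dist_eq_norm, hnorm]
    have hu' := hu.trans (min_le_right _ _)
    have hv' := hv.trans (min_le_right _ _)
    exact max_lt (by linarith) (by linarith)
  have hfin := hball hlt
  rwa [hnorm, sub_zero] at hfin
end
end

section
/- Let x be a surface patch with a rounded corner at (0,0), with cross components ρ, σ > 0. Then there exist constants C > 0 and H' ∈ (0,H] such that for all (u,v) ∈ [0,H']² \ {(0,0)}: (1/2)(ρu + σv) ≤ ‖x_u(u,v) × x_v(u,v)‖ ≤ 2(ρu + σv), and consequently 1/‖x_u(u,v) × x_v(u,v)‖ ≤ C / max{u,v}; in particular x_u × x_v is nonzero on [0,H']² \ {(0,0)}. -/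
/-!
Write `W = x_u × x_v`. Antiparallelism gives `W(0,0) = λt × (-μt) = 0`, and the product rule,
together with the symmetry of the second derivative, gives
`DW(0,0)(u,v) = u (t × r) + v (t × s)`. By coplanarity and onesidedness `t × s` is a positive
multiple of `t × r`, so that for `u, v ≥ 0` this linear part has norm exactly `ρu + σv`, where
`ρ = ‖t × r‖` and `σ = ‖t × s‖`. Since `ρ, σ > 0`, the linear part is bounded below by a multiple of
`max u v`, and the remainder `o(max u v)` is at most half of it close to the corner.
-/

open scoped RealInnerProductSpace

noncomputable section

/-- The cross product on `E3` as a continuous bilinear map. -/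
def crossL : E3 →L[ℝ] E3 →L[ℝ] E3 :=
  LinearMap.toContinuousLinearMap
    ((LinearMap.toContinuousLinearMap : (E3 →ₗ[ℝ] E3) ≃ₗ[ℝ] (E3 →L[ℝ] E3)).toLinearMap ∘ₗ
      LinearMap.mk₂ ℝ cross3
        (by intro a b c; ext i; simp [cross3])
        (by intro k a b; ext i; simp [cross3])
        (by intro a b c; ext i; simp [cross3])
        (by intro k a b; ext i; simp [cross3]))

lemma crossL_apply (a b : E3) : crossL a b = cross3 a b := rfl

lemma crossL_self (a : E3) : crossL a a = 0 := by
  ext i; simp [crossL_apply, cross3]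

lemma crossL_anticomm (a b : E3) : crossL a b = -crossL b a := by
  ext i; fin_cases i <;> simp [crossL_apply, cross3, crossProduct] <;> ring

lemma inner_crossL (a b c : E3) : ⟪crossL a b, c⟫ = ⟪a, crossL b c⟫ := by
  simp [crossL_apply, cross3, crossProduct, PiLp.inner_apply, Fin.sum_univ_three]
  ring

/-- Coplanarity and onesidedness make `t × s` a positive multiple of `t × r`. -/
lemma exists_cross_eq_smul {r s t : E3} (ht : t ≠ 0) (hcop : ¬ LinearIndependent ℝ ![r, s, t])
    (hone : 0 < ⟪crossL t r, crossL t s⟫) :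
    ∃ k : ℝ, 0 < k ∧ crossL t s = k • crossL t r := by
  obtain ⟨g, hg, i, hi⟩ := Fintype.not_linearIndependent_iff.1 hcop
  simp only [Fin.sum_univ_three, Matrix.cons_val] at hg
  have hA : crossL t r ≠ 0 := by
    rintro h
    simp [h] at hone
  have h1 : g 0 • crossL t r + g 1 • crossL t s = 0 := by
    simpa [crossL_self] using congrArg (crossL t) hg
  have hb : g 1 ≠ 0 := by
    intro hb
    have ha : g 0 = 0 := by simpa [hb, hA] using h1
    have hd : g 2 = 0 := by simpa [ha, hb, ht] using hg
    fin_cases i <;> simp_all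
  have hB : crossL t s = (-(g 0 / g 1)) • crossL t r := by
    have h2 : g 1 • crossL t s = (-g 0) • crossL t r := by
      rw [neg_smul]; exact eq_neg_of_add_eq_zero_right h1
    calc crossL t s = (g 1)⁻¹ • (g 1 • crossL t s) := by rw [inv_smul_smul₀ hb]
      _ = _ := by rw [h2, smul_smul]; congr 1; field_simp
  refine ⟨_, ?_, hB⟩
  rw [hB, inner_smul_right, real_inner_self_eq_norm_sq] at hone
  exact pos_of_mul_pos_left hone (sq_nonneg _)

/-- The linearisation of the surface normal `x_u × x_v` at a point: product rule plus symmetry of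
the second derivative. -/
lemma hasFDerivAt_cross {x : ℝ × ℝ → E3} (hx : ContDiff ℝ 3 x) (p : ℝ × ℝ) :
    ∃ L : ℝ × ℝ →L[ℝ] E3, HasFDerivAt (fun q => crossL (pd1 x q) (pd2 x q)) L p ∧
      ∀ u v : ℝ, L (u, v) =
        u • (crossL (pd1 x p) (pd2 (pd1 x) p) + crossL (pd1 (pd1 x) p) (pd2 x p)) +
        v • (crossL (pd1 x p) (pd2 (pd2 x) p) + crossL (pd2 (pd1 x) p) (pd2 x p)) := by
  have hd : DifferentiableAt ℝ (fderiv ℝ x) p :=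
    ((hx.fderiv_right (m := 2) (by norm_num)).differentiable (by norm_num)) p
  have e1 : HasFDerivAt (pd1 x) ((fderiv ℝ (fderiv ℝ x) p).flip (1, 0)) p := by
    have h := hd.hasFDerivAt.clm_apply (hasFDerivAt_const ((1, 0) : ℝ × ℝ) p)
    rw [ContinuousLinearMap.comp_zero, zero_add] at h
    exact h
  have e2 : HasFDerivAt (pd2 x) ((fderiv ℝ (fderiv ℝ x) p).flip (0, 1)) p := by
    have h := hd.hasFDerivAt.clm_apply (hasFDerivAt_const ((0, 1) : ℝ × ℝ) p)
    rw [ContinuousLinearMap.comp_zero, zero_add] at h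
    exact h
  have hsymm : pd1 (pd2 x) p = pd2 (pd1 x) p := by
    have h : IsSymmSndFDerivAt ℝ x p := hx.contDiffAt.isSymmSndFDerivAt (by simp; norm_num)
    simpa [pd1, pd2, e1.fderiv, e2.fderiv] using h (1, 0) (0, 1)
  refine ⟨_, crossL.hasFDerivAt_of_bilinear e1 e2, fun u v => ?_⟩
  have split (f : ℝ × ℝ → E3) : fderiv ℝ f p (u, v) = u • pd1 f p + v • pd2 f p := by
    rw [pd1, pd2, ← map_smul, ← map_smul, ← map_add]; simp
  rw [← e1.fderiv, ← e2.fderiv]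
  simp only [add_apply, ContinuousLinearMap.precompR, ContinuousLinearMap.compL_apply,
    ContinuousLinearMap.comp_apply, ContinuousLinearMap.precompL_apply, split, hsymm,
    map_add, map_smul, smul_apply]
  module

/-- **Two-sided bound for the surface element at a rounded corner.**
If `x` has a rounded corner at `(0,0)` with cross components `ρ = ⟨c, r⟩`,
`σ = ⟨c, s⟩` (where `n = (t × r)/‖t × r‖` and `c = n × t`), then near the
corner `(ρu + σv)/2 ≤ ‖x_u × x_v‖ ≤ 2(ρu + σv)`; consequently
`x_u × x_v ≠ 0` away from the origin and `1/‖x_u × x_v‖ ≤ C/max{u,v}`. -/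
theorem rounded_corner_surface_element_two_sided
    (H : ℝ) (hH : 0 < H) (x : ℝ × ℝ → E3) (hx : ContDiff ℝ 3 x)
    (t : E3) (ht : ‖t‖ = 1) (lam mu : ℝ) (hlam : 0 < lam) (hmu : 0 < mu)
    (hxi10 : pd1 x (0, 0) = lam • t)
    (hxi01 : pd2 x (0, 0) = -(mu • t))
    (r s : E3)
    (hr : r = mu • pd1 (pd1 x) (0, 0) + lam • pd2 (pd1 x) (0, 0))
    (hs : s = lam • pd2 (pd2 x) (0, 0) + mu • pd2 (pd1 x) (0, 0))
    (hcop : ¬ LinearIndependent ℝ ![r, s, t])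
    (hone : 0 < ⟪cross3 t r, cross3 t s⟫)
    (n : E3) (hn : n = ‖cross3 t r‖⁻¹ • cross3 t r)
    (c : E3) (hc : c = cross3 n t)
    (ρ σ : ℝ) (hρ : ρ = ⟪c, r⟫) (hσ : σ = ⟪c, s⟫) :
    ∃ C : ℝ, 0 < C ∧ ∃ H' : ℝ, H' ∈ Set.Ioc 0 H ∧
      ∀ u v : ℝ, u ∈ Set.Icc (0 : ℝ) H' → v ∈ Set.Icc (0 : ℝ) H' → (u, v) ≠ (0, 0) →
        (ρ * u + σ * v) / 2 ≤ ‖cross3 (pd1 x (u, v)) (pd2 x (u, v))‖ ∧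
        ‖cross3 (pd1 x (u, v)) (pd2 x (u, v))‖ ≤ 2 * (ρ * u + σ * v) ∧
        cross3 (pd1 x (u, v)) (pd2 x (u, v)) ≠ 0 ∧
        ‖cross3 (pd1 x (u, v)) (pd2 x (u, v))‖⁻¹ ≤ C / max u v := by
  simp only [← crossL_apply] at *
  have ht0 : t ≠ 0 := by
    rintro rfl
    simp at ht
  obtain ⟨k, hk, hB⟩ := exists_cross_eq_smul ht0 hcop hone
  set A := crossL t r with hA
  have hA0 : 0 < ‖A‖ := by
    rw [norm_pos_iff]
    rintro h
    simp [h] at hone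
  have hρA : ρ = ‖A‖ := by
    rw [hρ, hc, inner_crossL, ← hA, hn, real_inner_smul_left, real_inner_self_eq_norm_sq]
    field_simp
  have hσA : σ = k * ‖A‖ := by
    rw [hσ, hc, inner_crossL, hB, hn, real_inner_smul_left, real_inner_smul_right,
      real_inner_self_eq_norm_sq]
    field_simp
  have hρ0 : 0 < ρ := hρA ▸ hA0
  have hσ0 : 0 < σ := hσA ▸ mul_pos hk hA0
  obtain ⟨L, hL, hLuv⟩ := hasFDerivAt_cross hx (0, 0)
  have hW0 : crossL (pd1 x (0, 0)) (pd2 x (0, 0)) = 0 := by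
    simp [hxi10, hxi01, crossL_self]
  have hLA (u v : ℝ) : L (u, v) = (u + k * v) • A := by
    have h : L (u, v) = u • crossL t r + v • crossL t s := by
      rw [hLuv, hxi10, hxi01, hr, hs, crossL_anticomm (pd1 (pd1 x) (0, 0)),
        crossL_anticomm (pd2 (pd1 x) (0, 0))]
      simp only [map_add, map_smul, map_neg, neg_apply,
        smul_apply]
      module
    rw [h, hB, ← hA]
    module
  have hm : 0 < min ρ σ := lt_min hρ0 hσ0
  -- The tolerance `min ρ σ / 2` makes the remainder at most half of the linear part.
  have hev := hL.isLittleO.def (half_pos hm)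
  obtain ⟨δ, hδ, hball⟩ := Metric.eventually_nhds_iff.1 hev
  refine ⟨2 / min ρ σ, by positivity, min H (δ / 2), ⟨by positivity, min_le_left _ _⟩, ?_⟩
  rintro u v ⟨hu0, hu⟩ ⟨hv0, hv⟩ huv
  have hnorm : ‖((u, v) : ℝ × ℝ)‖ = max u v := by
    simp [Prod.norm_def, abs_of_nonneg hu0, abs_of_nonneg hv0]
  have hmax : 0 < max u v := by
    rw [← hnorm, norm_pos_iff]
    exact huv
  have hdist : dist ((u, v) : ℝ × ℝ) (0, 0) < δ := by
    have h : max u v ≤ δ / 2 := (max_le hu hv).trans (min_le_right _ _)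
    rw [← Prod.zero_eq_mk, dist_zero_right, hnorm]
    linarith
  have hrem := hball hdist
  rw [hW0, ← Prod.zero_eq_mk, sub_zero, sub_zero, hnorm, hLA] at hrem
  have hlin : ‖(u + k * v) • A‖ = ρ * u + σ * v := by
    rw [norm_smul, Real.norm_of_nonneg (by positivity), hρA, hσA]
    ring
  have hlow : min ρ σ * max u v ≤ ρ * u + σ * v := by
    have h1 := mul_le_mul_of_nonneg_right (min_le_left ρ σ) hu0
    have h2 := mul_le_mul_of_nonneg_right (min_le_right ρ σ) hv0
    have h3 := mul_nonneg hρ0.le hu0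
    have h4 := mul_nonneg hσ0.le hv0
    rcases max_cases u v with ⟨h, _⟩ | ⟨h, _⟩ <;> rw [h] <;> linarith
  have hpos := mul_pos hm hmax
  have habs := abs_le.1 ((abs_norm_sub_norm_le _ _).trans hrem)
  rw [hlin] at habs
  have hge : min ρ σ * max u v / 2 ≤ ‖crossL (pd1 x (u, v)) (pd2 x (u, v))‖ := by
    linarith [habs.1]
  refine ⟨by linarith [habs.1], by linarith [habs.2], ?_, ?_⟩
  · rw [← norm_pos_iff]
    linarith
  · calc _ ≤ (min ρ σ * max u v / 2)⁻¹ := inv_anti₀ (by positivity) hge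
      _ = _ := by field_simp
end
end
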